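/- arXiv:math-ph/9903011 — 4 statements merged into one kernel-verified Lean document; each statement's English description precedes it below -/
import Mathlib

section
/- Let α ∈ (0,1) be irrational, θ ∈ [0,1), n ∈ ℕ, and let (I^n_j, z^n_j)_{j∈ℤ} be the unique (n,α)-partition of v_{α,θ}. If z^n_j = s_{n−1} for some j ∈ ℤ, then z^n_{j−1} = s_n and z^n_{j+1} = s_n. -/
/-!
Write `y x = fract (x α + θ)`. Reading one letter `b` of the Sturmian sequence at position `x`
changes `y` by `α - b`, so reading a word `w` changes `y` by `|w| α - |w|₁`, where `|w|₁` counts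
the ones of `w`. For the standard words this displacement is `± E`, where `E` is a positive
sequence (the distances `|qₙ α - pₙ|`), with signs alternating from one word to the next.

The key lemma `spread_lt` says that the values of `y` at the break points of a partition into
the words `s_m`, `s_{m-1}` lie within distance `< ε_m + ε_{m-1}` of each other, `ε` being the
absolute displacements. It is proved by induction on `m`: cutting each block
`s_{m+1} = s_m ^ a s_{m-1}` into its factors turns a partition of level `m + 1` into one of
level `m`. If two break points of level `m + 1` were too far apart, the extremal one could not
start a block `s_{m+1}`, since the factor `s_{m-1}` in it would start at a point
contradicting the bound of level `m`; so it starts a block `s_m`, which moves the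
point further away by `ε_m`. Repeating this contradicts the boundedness of `y`.

Two adjacent blocks `s_{n-1}` would move `y` by `2 ε_{n-1}`, which exceeds `ε_n + ε_{n-1}` because
`ε_n < ε_{n-1}` for `n ≥ 1`. Hence both neighbours of a block `s_{n-1}` are `s_n`.
-/

/-- Partial quotients of the continued fraction expansion of `α ∈ (0,1)`:
`cfa α n = a_n` for `n ≥ 1`, computed via the Gauss map. -/
noncomputable def cfa (α : ℝ) (n : ℕ) : ℕ :=
  ⌊((fun x : ℝ => Int.fract x⁻¹)^[n - 1] α)⁻¹⌋₊

/-- The standard Sturmian words, with index shifted by one: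
`sw α (n+1)` is the word `s_n` of the paper (so `sw α 0 = s₋₁ = 1`, `sw α 1 = s₀ = 0`,
`sw α 2 = s₁ = s₀^(a₁-1) s₋₁`, and `s_n = s_{n-1}^{a_n} s_{n-2}` for `n ≥ 2`).
The letter `1` is encoded by `true` and `0` by `false`. -/
noncomputable def sw (α : ℝ) : ℕ → List Bool
  | 0 => [true]
  | 1 => [false]
  | 2 => (List.replicate (cfa α 1 - 1) [false]).flatten ++ [true]
  | n + 3 => (List.replicate (cfa α (n + 2)) (sw α (n + 2))).flatten ++ sw α (n + 1)

/-- Denominators of the rational approximants: `q₀ = 1`, `q₁ = a₁`, `qₙ = aₙ q_{n-1} + q_{n-2}`. -/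
noncomputable def qden (α : ℝ) : ℕ → ℕ
  | 0 => 1
  | 1 => cfa α 1
  | n + 2 => cfa α (n + 2) * qden α (n + 1) + qden α n

open scoped Classical in
/-- The Sturmian potential `v_{α,θ}(n) = χ_{[1-α,1)}(nα + θ mod 1)`, with value `1`
encoded by `true` and `0` by `false` (note `Int.fract x < 1` always). -/
noncomputable def sturmian (α θ : ℝ) (n : ℤ) : Bool :=
  if 1 - α ≤ Int.fract ((n : ℝ) * α + θ) then true else false

/-- An `(n,α)`-partition of a two-sided sequence `f : ℤ → Bool`, given by the
break points `d : ℤ → ℤ` (interval `I_j = {d j, …, d (j+1) - 1}`) and blocks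
`z : ℤ → List Bool`: the `d j` are strictly increasing, `0 ∈ I₀`, each block is
`s_n = sw α (n+1)` or `s_{n-1} = sw α n`, consecutive intervals are adjacent with
`I_j` of length `(z j).length`, and `f` restricted to `I_j` spells the word `z j`. -/
def IsNPartition (α : ℝ) (n : ℕ) (f : ℤ → Bool) (d : ℤ → ℤ) (z : ℤ → List Bool) : Prop :=
  StrictMono d ∧
  (d 0 ≤ 0 ∧ 0 < d 1) ∧
  (∀ j : ℤ, z j = sw α (n + 1) ∨ z j = sw α n) ∧
  (∀ j : ℤ, d (j + 1) = d j + (z j).length) ∧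
  (∀ j : ℤ, z j = (List.range (z j).length).map fun k => f (d j + (k : ℤ)))

/-- The finite word `x` occurs in the two-sided sequence `v` adjacent to `i`:
either `x = v_i v_{i+1} … v_{i+l-1}` or `x = v_{i-l+1} … v_{i-1} v_i`. -/
def AdjacentTo (v : ℤ → Bool) (x : List Bool) (i : ℤ) : Prop :=
  x = ((List.range x.length).map fun k => v (i + (k : ℤ))) ∨
  x = ((List.range x.length).map fun k => v (i - (x.length : ℤ) + 1 + (k : ℤ)))

/-! ### Occurrences of words -/

/-- The word `w` occurs in the two-sided sequence `f` starting at position `x`. -/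
def OccursAt (f : ℤ → Bool) : List Bool → ℤ → Prop
  | [], _ => True
  | b :: w, x => f x = b ∧ OccursAt f w (x + 1)

lemma occursAt_append (f : ℤ → Bool) (u v : List Bool) (x : ℤ) :
    OccursAt f (u ++ v) x ↔ OccursAt f u x ∧ OccursAt f v (x + u.length) := by
  induction u generalizing x with
  | nil => simp [OccursAt]
  | cons b u ih =>
    have e : x + 1 + (u.length : ℤ) = x + ((u.length : ℤ) + 1) := by ring
    simp [OccursAt, ih, and_assoc, e]

lemma occursAt_of_eq_map (f : ℤ → Bool) (w : List Bool) (x : ℤ)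
    (h : w = (List.range w.length).map fun k => f (x + (k : ℤ))) : OccursAt f w x := by
  induction w generalizing x with
  | nil => trivial
  | cons b w ih =>
    -- the cast `ℕ → ℤ` is elaborated as a monadic lift of the whole list `List.range _`
    simp only [List.bind_eq_flatMap, List.pure_def, ← List.map_eq_flatMap, List.map_map] at h ih
    rw [List.length_cons, List.range_succ_eq_map, List.map_cons, List.map_map] at h
    injection h with h1 h2
    refine ⟨by simpa using h1.symm, ih (x + 1) (h2.trans (List.map_congr_left fun k _ => ?_))⟩
    simp only [Function.comp, Nat.succ_eq_add_one]
    push_cast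
    congr 1
    ring

/-- If `u ^ b ++ v` occurs at `x`, then `u` occurs at each `x + i |u|`, `i < b`, and `v` occurs at
`x + b |u|`. -/
lemma occursAt_pow_append (f : ℤ → Bool) (u v : List Bool) (b : ℕ) (x : ℤ)
    (h : OccursAt f ((List.replicate b u).flatten ++ v) x) :
    (∀ i < b, OccursAt f u (x + i * u.length)) ∧ OccursAt f v (x + b * u.length) := by
  induction b generalizing x with
  | zero => simpa using h
  | succ b ih =>
    rw [List.replicate_succ, List.flatten_cons, List.append_assoc, occursAt_append] at h
    obtain ⟨h1, h2⟩ := h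
    obtain ⟨h3, h4⟩ := ih _ h2
    refine ⟨fun i hi => ?_, ?_⟩
    · cases i with
      | zero => simpa using h1
      | succ i =>
        convert h3 i (by omega) using 1
        push_cast
        ring
    · convert h4 using 1
      push_cast
      ring

/-! ### Displacement of the rotation orbit along words -/

/-- The point `x α + θ mod 1` of the rotation orbit. -/
noncomputable def orb (α θ : ℝ) (x : ℤ) : ℝ := Int.fract ((x : ℝ) * α + θ)

/-- The displacement `|w| α - |w|₁` of the rotation orbit along an occurrence of `w`. -/
noncomputable def disp (α : ℝ) (w : List Bool) : ℝ := w.length * α - w.count true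

lemma disp_append (α : ℝ) (u v : List Bool) : disp α (u ++ v) = disp α u + disp α v := by
  simp only [disp, List.length_append, List.count_append]
  push_cast
  ring

lemma disp_pow (α : ℝ) (u : List Bool) (b : ℕ) :
    disp α (List.replicate b u).flatten = b * disp α u := by
  induction b with
  | zero => simp [disp]
  | succ b ih =>
    rw [List.replicate_succ, List.flatten_cons, disp_append, ih]
    push_cast
    ring

lemma orb_succ (α θ : ℝ) (hα0 : 0 < α) (hα1 : α < 1) (x : ℤ) :
    orb α θ (x + 1) = orb α θ x + disp α [sturmian α θ x] := by
  have e : ((x + 1 : ℤ) : ℝ) * α + θ = (x * α + θ) + α := by push_cast; ring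
  have h0 := Int.fract_nonneg ((x : ℝ) * α + θ)
  have h1 := Int.fract_lt_one ((x : ℝ) * α + θ)
  have h2 := Int.self_sub_floor ((x : ℝ) * α + θ)
  unfold orb sturmian
  rw [e, Int.fract_eq_iff]
  split_ifs with h
  · refine ⟨?_, ?_, ⌊(x : ℝ) * α + θ⌋ + 1, ?_⟩
    · simp [disp]; linarith
    · simp [disp]; linarith
    · simp [disp]; linarith
  · push Not at h
    refine ⟨?_, ?_, ⌊(x : ℝ) * α + θ⌋, ?_⟩
    · simp [disp]; linarith
    · simp [disp]; linarith
    · simp [disp]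

lemma orb_add_length (α θ : ℝ) (hα0 : 0 < α) (hα1 : α < 1) (w : List Bool) (x : ℤ)
    (h : OccursAt (sturmian α θ) w x) :
    orb α θ (x + w.length) = orb α θ x + disp α w := by
  induction w generalizing x with
  | nil => simp [disp]
  | cons b w ih =>
    obtain ⟨h1, h2⟩ := h
    have h3 := ih _ h2
    rw [orb_succ α θ hα0 hα1, h1] at h3
    have e : x + ((b :: w).length : ℤ) = x + 1 + w.length := by
      simp only [List.length_cons]; push_cast; ring
    rw [e, h3, ← List.singleton_append (l := w), disp_append]
    ring

/-! ### Displacements of the standard words -/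

/-- The exponents in the recursion of the standard words: `a₁ - 1, a₂, a₃, …`. -/
noncomputable def expo (α : ℝ) : ℕ → ℕ
  | 0 => cfa α 1 - 1
  | n + 1 => cfa α (n + 2)

lemma sw_succ_succ (α : ℝ) (n : ℕ) :
    sw α (n + 2) = (List.replicate (expo α n) (sw α (n + 1))).flatten ++ sw α n := by
  cases n <;> simp [sw, expo]

/-- The iterates of the Gauss map at `α`. -/
noncomputable def gauss (α : ℝ) (n : ℕ) : ℝ := (fun x : ℝ => Int.fract x⁻¹)^[n] α

lemma gauss_succ (α : ℝ) (n : ℕ) : gauss α (n + 1) = Int.fract (gauss α n)⁻¹ := by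
  simp only [gauss, Function.iterate_succ_apply']

lemma gauss_mem (α : ℝ) (hα0 : 0 < α) (hα1 : α < 1) (hirr : Irrational α) (n : ℕ) :
    0 < gauss α n ∧ gauss α n < 1 ∧ Irrational (gauss α n) := by
  induction n with
  | zero => exact ⟨hα0, hα1, hirr⟩
  | succ n ih =>
    obtain ⟨_, _, h⟩ := ih
    rw [gauss_succ]
    have hi : Irrational (Int.fract (gauss α n)⁻¹) := by
      rw [← Int.self_sub_floor]
      exact (irrational_inv_iff.2 h).sub_intCast _
    exact ⟨lt_of_le_of_ne (Int.fract_nonneg _) hi.ne_zero.symm, Int.fract_lt_one _, hi⟩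

/-- `wdist α m` is the absolute displacement of `sw α m`: `1 - α`, followed by the products
`α`, `α G(α)`, `α G(α) G²(α)`, … of iterates of the Gauss map `G`. -/
noncomputable def wdist (α : ℝ) : ℕ → ℝ
  | 0 => 1 - α
  | m + 1 => ∏ i ∈ Finset.range (m + 1), gauss α i

lemma cfa_eq (α : ℝ) (hα0 : 0 < α) (hα1 : α < 1) (hirr : Irrational α) (n : ℕ) :
    gauss α (n + 1) * gauss α n = 1 - cfa α (n + 1) * gauss α n := by
  obtain ⟨h0, -, -⟩ := gauss_mem α hα0 hα1 hirr n
  have h1 : (cfa α (n + 1) : ℝ) = ⌊(gauss α n)⁻¹⌋ := by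
    have : cfa α (n + 1) = ⌊(gauss α n)⁻¹⌋₊ := rfl
    rw [this, natCast_floor_eq_intCast_floor (inv_nonneg.2 h0.le)]
  rw [gauss_succ, ← Int.self_sub_floor, h1, sub_mul, inv_mul_cancel₀ h0.ne']

lemma wdist_rec (α : ℝ) (hα0 : 0 < α) (hα1 : α < 1) (hirr : Irrational α) (n : ℕ) :
    wdist α (n + 2) = wdist α n - expo α n * wdist α (n + 1) := by
  cases n with
  | zero =>
    have h := cfa_eq α hα0 hα1 hirr 0
    have hg : gauss α 0 = α := rfl
    -- `a₁ ≥ 1`, so the truncated subtraction in `expo α 0` is a true one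
    have h1 : 1 ≤ cfa α 1 := by
      have : 1 ≤ α⁻¹ := (one_le_inv₀ hα0).2 hα1.le
      exact Nat.le_floor (by simpa using this)
    simp only [wdist, expo, Finset.prod_range_succ, Finset.prod_range_zero, hg] at h ⊢
    push_cast [Nat.cast_sub h1]
    simp only [zero_add] at h ⊢
    linarith
  | succ n =>
    have h := cfa_eq α hα0 hα1 hirr (n + 1)
    simp only [wdist, expo, Finset.prod_range_succ] at h ⊢
    linear_combination (∏ i ∈ Finset.range n, gauss α i) * gauss α n * h

lemma wdist_pos (α : ℝ) (hα0 : 0 < α) (hα1 : α < 1) (hirr : Irrational α) (n : ℕ) :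
    0 < wdist α n := by
  cases n with
  | zero => simpa [wdist] using hα1
  | succ n => exact Finset.prod_pos fun i _ => (gauss_mem α hα0 hα1 hirr i).1

lemma wdist_succ_lt (α : ℝ) (hα0 : 0 < α) (hα1 : α < 1) (hirr : Irrational α) (n : ℕ) :
    wdist α (n + 2) < wdist α (n + 1) := by
  have e : wdist α (n + 2) = wdist α (n + 1) * gauss α (n + 1) := Finset.prod_range_succ _ _
  rw [e]
  exact mul_lt_of_lt_one_right (wdist_pos α hα0 hα1 hirr _) (gauss_mem α hα0 hα1 hirr _).2.1

lemma disp_sw (α : ℝ) (hα0 : 0 < α) (hα1 : α < 1) (hirr : Irrational α) (n : ℕ) :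
    disp α (sw α n) = (-1) ^ (n + 1) * wdist α n := by
  induction n using Nat.twoStepInduction with
  | zero => simp [disp, sw, wdist]
  | one => simp [disp, sw, wdist, gauss]
  | more n h0 h1 =>
    rw [sw_succ_succ, disp_append, disp_pow, h0, h1, wdist_rec α hα0 hα1 hirr]
    ring

/-! ### Break points and their spread -/

/-- A forward version of a partition of level `m`: from every point of `S`, an occurrence of
`sw α (m + 1)` or of `sw α m` leads to another point of `S`. -/
def IsBreakSet (α θ : ℝ) (m : ℕ) (S : Set ℤ) : Prop :=
  ∀ x ∈ S,
    (OccursAt (sturmian α θ) (sw α (m + 1)) x ∧ x + (sw α (m + 1)).length ∈ S) ∨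
    (OccursAt (sturmian α θ) (sw α m) x ∧ x + (sw α m).length ∈ S)

/-- The break points obtained by cutting the blocks `sw α (m + 2)` starting in `S` into their
factors `sw α (m + 1)` and `sw α m`. -/
def refinement (α θ : ℝ) (m : ℕ) (S : Set ℤ) : Set ℤ :=
  S ∪ {t | ∃ x ∈ S, OccursAt (sturmian α θ) (sw α (m + 2)) x ∧ x + (sw α (m + 2)).length ∈ S ∧
    ∃ i ≤ expo α m, t = x + i * (sw α (m + 1)).length}

lemma isBreakSet_refinement (α θ : ℝ) (m : ℕ) (S : Set ℤ) (h : IsBreakSet α θ (m + 1) S) :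
    IsBreakSet α θ m (refinement α θ m S) := by
  have key : ∀ x ∈ S, OccursAt (sturmian α θ) (sw α (m + 2)) x →
      x + (sw α (m + 2)).length ∈ S → ∀ i ≤ expo α m, ∀ t, t = x + i * (sw α (m + 1)).length →
      (OccursAt (sturmian α θ) (sw α (m + 1)) t ∧
        t + (sw α (m + 1)).length ∈ refinement α θ m S) ∨
      (OccursAt (sturmian α θ) (sw α m) t ∧ t + (sw α m).length ∈ refinement α θ m S) := by
    rintro x hx ho hl i hi t rfl
    have ho' := ho
    rw [sw_succ_succ] at ho'
    obtain ⟨h1, h2⟩ := occursAt_pow_append _ _ _ _ _ ho'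
    rcases hi.lt_or_eq with hlt | rfl
    · refine Or.inl ⟨h1 i hlt, Or.inr ⟨x, hx, ho, hl, i + 1, hlt, ?_⟩⟩
      push_cast
      ring
    · refine Or.inr ⟨h2, Or.inl ?_⟩
      convert hl using 1
      rw [sw_succ_succ]
      simp [List.length_flatten]
      ring
  rintro t (ht | ⟨x, hx, ho, hl, i, hi, rfl⟩)
  · rcases h t ht with ⟨ho, hl⟩ | ⟨ho, hl⟩
    · exact key t ht ho hl 0 (Nat.zero_le _) t (by simp)
    · exact Or.inl ⟨ho, Or.inl hl⟩
  · exact key x hx ho hl i hi _ rfl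

/-- The orbit points at the break points of level `m` lie in an interval of length
`wdist α m + wdist α (m + 1)`. The sign only makes the induction uniform in the parity of `m`:
the two points may be exchanged. -/
lemma spread_lt (α θ : ℝ) (hα0 : 0 < α) (hα1 : α < 1) (hirr : Irrational α) (m : ℕ)
    (S : Set ℤ) (h : IsBreakSet α θ m S) (x x' : ℤ) (hx : x ∈ S) (hx' : x' ∈ S) :
    (-1) ^ m * (orb α θ x - orb α θ x') < wdist α m + wdist α (m + 1) := by
  have bd : ∀ x x' : ℤ, orb α θ x - orb α θ x' < 1 := fun x x' => by
    have h1 := Int.fract_lt_one ((x : ℝ) * α + θ)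
    have h2 := Int.fract_nonneg ((x' : ℝ) * α + θ)
    simp only [orb]
    linarith
  induction m generalizing S x x' with
  | zero => simpa [wdist, gauss] using bd x x'
  | succ m ih =>
    have hR := ih _ (isBreakSet_refinement α θ m S h)
    by_contra! hc
    have pos := wdist_pos α hα0 hα1 hirr (m + 1)
    have hsq : ((-1 : ℝ) ^ m) * (-1) ^ m = 1 := by rw [← mul_pow]; simp
    -- the escape argument: from the extremal point on, blocks `sw α (m + 1)` would repeat forever
    have esc : ∀ N : ℕ, ∃ X ∈ S, wdist α (m + 1) + wdist α (m + 2) + N * wdist α (m + 1) ≤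
        (-1) ^ m * (orb α θ X - orb α θ x) := by
      intro N
      induction N with
      | zero =>
        refine ⟨x', hx', ?_⟩
        rw [pow_succ] at hc
        push_cast
        linarith
      | succ N ihN =>
        obtain ⟨X, hX, hle⟩ := ihN
        rcases h X hX with ⟨ho, hl⟩ | ⟨ho, hl⟩
        · exfalso
          have hlt := hR (X + expo α m * (sw α (m + 1)).length) x
            (Or.inr ⟨X, hX, ho, hl, _, le_rfl, rfl⟩) (Or.inl hx)
          have e : orb α θ (X + expo α m * (sw α (m + 1)).length) =
              orb α θ X + expo α m * ((-1) ^ m * wdist α (m + 1)) := by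
            rw [sw_succ_succ, occursAt_append] at ho
            have e1 := orb_add_length α θ hα0 hα1 _ _ ho.1
            rw [disp_pow, disp_sw α hα0 hα1 hirr] at e1
            have e2 : (((List.replicate (expo α m) (sw α (m + 1))).flatten.length : ℕ) : ℤ) =
                expo α m * (sw α (m + 1)).length := by simp [List.length_flatten]
            rw [e2] at e1
            rw [e1]
            ring
          have hN : (0 : ℝ) ≤ N * wdist α (m + 1) := by positivity
          rw [e] at hlt
          have hrec := wdist_rec α hα0 hα1 hirr m
          have : (-1 : ℝ) ^ m * (orb α θ X + expo α m * ((-1) ^ m * wdist α (m + 1)) -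
              orb α θ x) = (-1) ^ m * (orb α θ X - orb α θ x) + expo α m * wdist α (m + 1) := by
            linear_combination (expo α m * wdist α (m + 1)) * hsq
          linarith
        · refine ⟨_, hl, ?_⟩
          rw [orb_add_length α θ hα0 hα1 _ _ ho, disp_sw α hα0 hα1 hirr]
          have : (-1 : ℝ) ^ m * (orb α θ X + (-1) ^ (m + 1 + 1) * wdist α (m + 1) -
              orb α θ x) = (-1) ^ m * (orb α θ X - orb α θ x) + wdist α (m + 1) := by
            linear_combination (wdist α (m + 1)) * hsq
          push_cast
          linarith
    obtain ⟨N, hN⟩ := exists_nat_gt (1 / wdist α (m + 1))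
    rw [div_lt_iff₀ pos] at hN
    obtain ⟨X, -, hle⟩ := esc N
    have pos' := wdist_pos α hα0 hα1 hirr (m + 2)
    have hb : (-1 : ℝ) ^ m * (orb α θ X - orb α θ x) < 1 := by
      rcases neg_one_pow_eq_or ℝ m with hs | hs <;> rw [hs]
      · linarith [bd X x]
      · linarith [bd x X]
    linarith

/-- Two adjacent blocks cannot both be `s_{n-1}`. -/
lemma not_two_prev (α θ : ℝ) (hα0 : 0 < α) (hα1 : α < 1) (hirr : Irrational α) (n : ℕ)
    (hn : 1 ≤ n) (d : ℤ → ℤ) (z : ℤ → List Bool)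
    (h : IsNPartition α n (sturmian α θ) d z) (j : ℤ) (h0 : z j = sw α n)
    (h1 : z (j + 1) = sw α n) : False := by
  obtain ⟨-, -, hz, hd, hw⟩ := h
  have ho : ∀ j, OccursAt (sturmian α θ) (z j) (d j) := fun j =>
    occursAt_of_eq_map _ _ _ (hw j)
  have hS : IsBreakSet α θ n (Set.range d) := by
    rintro _ ⟨i, rfl⟩
    have hi := ho i
    have hi' : d i + (z i).length ∈ Set.range d := ⟨i + 1, hd i⟩
    rcases hz i with e | e <;> rw [e] at hi hi'
    · exact Or.inl ⟨hi, hi'⟩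
    · exact Or.inr ⟨hi, hi'⟩
  have hlt := spread_lt α θ hα0 hα1 hirr n _ hS (d j) (d (j + 1 + 1)) ⟨_, rfl⟩ ⟨_, rfl⟩
  have e0 := orb_add_length α θ hα0 hα1 _ _ (ho j)
  have e1 := orb_add_length α θ hα0 hα1 _ _ (ho (j + 1))
  rw [← hd, h0, disp_sw α hα0 hα1 hirr] at e0
  rw [← hd, h1, disp_sw α hα0 hα1 hirr] at e1
  have hsq : ((-1 : ℝ) ^ n) * (-1) ^ n = 1 := by rw [← mul_pow]; simp
  rw [e1, e0] at hlt
  obtain ⟨k, rfl⟩ : ∃ k, n = k + 1 := ⟨n - 1, by omega⟩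
  have := wdist_succ_lt α hα0 hα1 hirr k
  have e2 : (-1 : ℝ) ^ (k + 1) * (orb α θ (d j) - (orb α θ (d j) +
      (-1) ^ (k + 1 + 1) * wdist α (k + 1) + (-1) ^ (k + 1 + 1) * wdist α (k + 1))) =
      2 * wdist α (k + 1) := by
    linear_combination (2 * wdist α (k + 1)) * hsq
  linarith

/-- In the `(n,α)`-partition of `v_{α,θ}` (with `n ≥ 1`), every block of the form
`s_{n-1}` is surrounded by blocks of the form `s_n` (here `s_n = sw α (n+1)` and
`s_{n-1} = sw α n`). -/
theorem nPartition_block_prev_neighbors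
    (α : ℝ) (hα0 : 0 < α) (hα1 : α < 1) (hirr : Irrational α)
    (θ : ℝ) (hθ0 : 0 ≤ θ) (hθ1 : θ < 1) (n : ℕ) (hn : 1 ≤ n)
    (d : ℤ → ℤ) (z : ℤ → List Bool)
    (h : IsNPartition α n (sturmian α θ) d z)
    (j : ℤ) (hj : z j = sw α n) :
    z (j - 1) = sw α (n + 1) ∧ z (j + 1) = sw α (n + 1) := by
  refine ⟨(h.2.2.1 (j - 1)).resolve_right fun h1 => ?_,
    (h.2.2.1 (j + 1)).resolve_right fun h1 => ?_⟩
  · exact not_two_prev α θ hα0 hα1 hirr n hn d z h (j - 1) h1 (by rwa [sub_add_cancel])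
  · exact not_two_prev α θ hα0 hα1 hirr n hn d z h j hj h1
end

section
/- Let α ∈ (0,1) be irrational, θ ∈ [0,1), n ∈ ℕ, and let (I^n_j, z^n_j)_{j∈ℤ} be the unique (n,α)-partition of v_{α,θ}. If z^n_j = s_n for some j ∈ ℤ, then there exists an interval of integers I = {d, d+1, ..., d+l−1} with length l ∈ {a_{n+1}, a_{n+1}+1} such that j ∈ I, z^n_i = s_n for all i ∈ I, and z^n_{d−1} = z^n_{d+l} = s_{n−1}. -/
/-! ### Words read in a sequence -/

/-- The sequence `f` spells the word `w` from position `k` on. -/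
def Reads (f : ℤ → Bool) : ℤ → List Bool → Prop
  | _, [] => True
  | k, b :: w => f k = b ∧ Reads f (k + 1) w

theorem reads_append (f : ℤ → Bool) (w w' : List Bool) (k : ℤ) :
    Reads f k (w ++ w') ↔ Reads f k w ∧ Reads f (k + w.length) w' := by
  induction w generalizing k with
  | nil => simp [Reads]
  | cons b w ih =>
    have e : k + 1 + (w.length : ℤ) = k + ((b :: w).length : ℤ) := by
      simp only [List.length_cons]; push_cast; ring
    simp only [List.cons_append, Reads, ih, e, and_assoc]

theorem reads_of_eq_map (f : ℤ → Bool) (w : List Bool) (k : ℤ)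
    (h : w = (List.range w.length).map fun i : ℕ => f (k + (i : ℤ))) : Reads f k w := by
  induction w generalizing k with
  | nil => trivial
  | cons b w ih =>
    simp only [List.length_cons, List.range_succ_eq_map, List.map_cons, List.map_map] at h
    obtain ⟨h1, h2⟩ := List.cons.inj h
    refine ⟨by simpa using h1.symm, ih _ (h2.trans ?_)⟩
    apply List.map_congr_left
    intro i _
    simp only [Function.comp]
    congr 1
    push_cast
    ring

theorem reads_power (f : ℤ → Bool) (w w' : List Bool) (a : ℕ) (k : ℤ)
    (h : Reads f k ((List.replicate a w).flatten ++ w')) :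
    (∀ i < a, Reads f (k + i * w.length) w) ∧ Reads f (k + a * w.length) w' := by
  induction a generalizing k with
  | zero => simpa using h
  | succ a ih =>
    rw [List.replicate_succ, List.flatten_cons, List.append_assoc, reads_append] at h
    obtain ⟨h1, h2⟩ := h
    obtain ⟨h3, h4⟩ := ih _ h2
    constructor
    · rintro (_ | i) hi
      · simpa using h1
      · have := h3 i (by omega)
        convert this using 1
        push_cast
        ring
    · convert h4 using 1
      push_cast
      ring

/-! ### Interval exchanges and their renormalization -/

/-- `S` and `T` are sets of starting positions of blocks `w` and `w'` in `f`, closed under passing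
to the position right after a block. The two labelled sets of break points of a decomposition of
`f` into `w` and `w'` have this property. -/
def Chain (f : ℤ → Bool) (w w' : List Bool) (S T : Set ℤ) : Prop :=
  (∀ k ∈ S, Reads f k w ∧ (k + w.length ∈ S ∨ k + w.length ∈ T)) ∧
  (∀ k ∈ T, Reads f k w' ∧ (k + w'.length ∈ S ∨ k + w'.length ∈ T))

theorem length_power (w w' : List Bool) (a : ℕ) :
    (((List.replicate a w).flatten ++ w').length : ℤ) = a * w.length + w'.length := by
  simp

/-- In every decomposition of `f` into blocks `w` and `w'`, the blocks follow, in a suitable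
coordinate `u`, the exchange of the intervals `[0, L]` (for `w`) and `[L, L + δ]` (for `w'`). -/
def Located (f : ℤ → Bool) (w w' : List Bool) (L δ : ℝ) : Prop :=
  ∃ u : ℤ → ℝ, ∀ S S' : Set ℤ, Chain f w w' S S' →
    (∀ k ∈ S, 0 ≤ u k ∧ u k ≤ L ∧ u (k + w.length) = u k + δ) ∧
    (∀ k ∈ S', L ≤ u k ∧ u k ≤ L + δ ∧ u (k + w'.length) = u k - L)

/-- Renormalization: passing from blocks `w`, `w'` to blocks `w ^ a w'`, `w`. -/
theorem Located.step {f : ℤ → Bool} {w w' : List Bool} {L δ : ℝ} (hδ : 0 < δ)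
    (h : Located f w w' L δ) (a : ℕ) :
    Located f ((List.replicate a w).flatten ++ w') w δ (L - a * δ) := by
  obtain ⟨u, hu⟩ := h
  refine ⟨fun k => δ + (L - a * δ) - u k, fun S S' hS => ?_⟩
  obtain ⟨hS1, hS2⟩ := hS
  simp only [length_power] at hS1 ⊢
  -- the refined decomposition: `R` and `R'` hold the starts of the blocks `w` and `w'`
  let R : Set ℤ := {m | m ∈ S' ∨ ∃ k ∈ S, ∃ i : ℕ, i < a ∧ m = k + i * w.length}
  let R' : Set ℤ := {m | ∃ k ∈ S, m = k + a * w.length}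
  have hstart : ∀ m, m ∈ S ∨ m ∈ S' → m ∈ R ∨ m ∈ R' := by
    rintro m (hm | hm)
    · rcases Nat.eq_zero_or_pos a with ha | ha
      · exact Or.inr ⟨m, hm, by simp [ha]⟩
      · exact Or.inl (Or.inr ⟨m, hm, 0, ha, by simp⟩)
    · exact Or.inl (Or.inl hm)
  have hR : Chain f w w' R R' := by
    constructor
    · rintro m (hm | ⟨k, hk, i, hi, rfl⟩)
      · exact ⟨(hS2 m hm).1, hstart _ (hS2 m hm).2⟩
      · refine ⟨(reads_power f w w' a k (hS1 k hk).1).1 i hi, ?_⟩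
        rcases Nat.lt_or_ge (i + 1) a with hia | hia
        · exact Or.inl (Or.inr ⟨k, hk, i + 1, hia, by push_cast; ring⟩)
        · have : a = i + 1 := by omega
          exact Or.inr ⟨k, hk, by rw [this]; push_cast; ring⟩
    · rintro m ⟨k, hk, rfl⟩
      refine ⟨(reads_power f w w' a k (hS1 k hk).1).2, hstart _ ?_⟩
      have := (hS1 k hk).2
      rwa [← add_assoc] at this
  obtain ⟨h1, h2⟩ := hu R R' hR
  have hpow : ∀ k ∈ S, ∀ i : ℕ, i ≤ a → u (k + i * w.length) = u k + i * δ := by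
    intro k hk i
    induction i with
    | zero => simp
    | succ i ih =>
      intro hi
      have e := (h1 (k + i * w.length) (Or.inr ⟨k, hk, i, by omega, rfl⟩)).2.2
      rw [ih (by omega)] at e
      have e2 : k + ((i + 1 : ℕ) : ℤ) * w.length = k + i * w.length + w.length := by
        push_cast; ring
      rw [e2, e]
      push_cast
      ring
  have hlong : ∀ k ∈ S, L - a * δ ≤ u k ∧ u k ≤ L - a * δ + δ ∧
      u (k + (a * w.length + w'.length)) = u k + a * δ - L := by
    intro k hk
    obtain ⟨e1, e2, e3⟩ := h2 (k + a * w.length) ⟨k, hk, rfl⟩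
    rw [hpow k hk a le_rfl] at e1 e2 e3
    refine ⟨by linarith, by linarith, ?_⟩
    rw [← add_assoc, e3]
  -- A single `w` is eventually followed by a block `w ^ a w'`, since `u` grows by `δ` along
  -- each `w` but stays at most `L`. This bounds `u` by `L - a δ` at each single `w`.
  have hshort : ∀ m : ℕ, ∀ k ∈ S', L + δ - m * δ ≤ u k → u k ≤ L - a * δ := by
    intro m
    induction m with
    | zero =>
      intro k hk hm
      have := (h1 k (Or.inl hk)).2.1
      simp at hm
      linarith
    | succ m ih =>
      intro k hk hm
      have e := (h1 k (Or.inl hk)).2.2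
      rcases (hS2 k hk).2 with hn | hn
      · have := (hlong _ hn).2.1
        linarith
      · have := ih _ hn (by push_cast at hm; linarith)
        linarith
  constructor
  · intro k hk
    obtain ⟨e1, e2, e3⟩ := hlong k hk
    refine ⟨by linarith, by linarith, ?_⟩
    rw [e3]; ring
  · intro k hk
    obtain ⟨e1, e2, e3⟩ := h1 k (Or.inl hk)
    obtain ⟨m, hm⟩ := exists_nat_ge ((L + δ) / δ)
    rw [div_le_iff₀ hδ] at hm
    have := hshort m k hk (by linarith)
    refine ⟨by linarith, by linarith, ?_⟩
    rw [e3]; ring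

/-! ### The letters -/

/-- The letters follow the rotation by `α`, an exchange of intervals of lengths `1 - α`, `α`. -/
theorem located_letters (α θ : ℝ) (hα0 : 0 < α) (hα1 : α < 1) :
    Located (sturmian α θ) [false] [true] (1 - α) α := by
  refine ⟨fun k => Int.fract ((k : ℝ) * α + θ), fun S S' hS => ⟨?_, ?_⟩⟩
  · intro k hk
    have h := (hS.1 k hk).1.1
    have hlt : Int.fract ((k : ℝ) * α + θ) < 1 - α := by
      by_contra hc
      simp [sturmian, not_lt.mp hc] at h
    have h0 := Int.fract_nonneg ((k : ℝ) * α + θ)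
    refine ⟨h0, hlt.le, ?_⟩
    rw [Int.fract_eq_iff]
    refine ⟨by linarith, by linarith, ⌊(k : ℝ) * α + θ⌋, ?_⟩
    have := Int.self_sub_floor ((k : ℝ) * α + θ)
    simp only [List.length_singleton]
    push_cast
    linarith
  · intro k hk
    have h := (hS.2 k hk).1.1
    have hle : 1 - α ≤ Int.fract ((k : ℝ) * α + θ) := by
      by_contra hc
      simp only [sturmian, if_neg hc] at h
      cases h
    have h1 := Int.fract_lt_one ((k : ℝ) * α + θ)
    refine ⟨hle, by linarith, ?_⟩
    rw [Int.fract_eq_iff]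
    refine ⟨by linarith, by linarith, ⌊(k : ℝ) * α + θ⌋ + 1, ?_⟩
    have := Int.self_sub_floor ((k : ℝ) * α + θ)
    simp only [List.length_singleton]
    push_cast
    linarith

/-! ### The Gauss map and the words `s_n` -/

/-- The `n`-th iterate of the Gauss map; `cfa α (n + 1) = ⌊(gaussIter α n)⁻¹⌋₊`. -/
noncomputable def gaussIter (α : ℝ) (n : ℕ) : ℝ := (fun x : ℝ => Int.fract x⁻¹)^[n] α

theorem gaussIter_succ (α : ℝ) (n : ℕ) :
    gaussIter α (n + 1) = Int.fract (gaussIter α n)⁻¹ := by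
  simp [gaussIter, Function.iterate_succ_apply']

theorem cfa_succ (α : ℝ) (n : ℕ) : cfa α (n + 1) = ⌊(gaussIter α n)⁻¹⌋₊ := rfl

theorem gaussIter_spec (α : ℝ) (hα0 : 0 < α) (hα1 : α < 1) (hirr : Irrational α) (n : ℕ) :
    0 < gaussIter α n ∧ gaussIter α n < 1 ∧ Irrational (gaussIter α n) := by
  induction n with
  | zero => exact ⟨hα0, hα1, hirr⟩
  | succ n ih =>
    rw [gaussIter_succ]
    have hi : Irrational (Int.fract (gaussIter α n)⁻¹) := by
      rw [← Int.self_sub_floor]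
      exact (irrational_inv_iff.mpr ih.2.2).sub_intCast _
    exact ⟨lt_of_le_of_ne (Int.fract_nonneg _) hi.ne_zero.symm, Int.fract_lt_one _, hi⟩

/-- One step of the Euclidean algorithm on lengths `L` and `L β`, with `β = gaussIter α n`. -/
theorem sub_cfa_mul (α : ℝ) (hα0 : 0 < α) (hα1 : α < 1) (hirr : Irrational α) (n : ℕ) (L : ℝ) :
    L - cfa α (n + 1) * (L * gaussIter α n) = L * gaussIter α n * gaussIter α (n + 1) := by
  have hp := (gaussIter_spec α hα0 hα1 hirr n).1
  have hf : ((⌊(gaussIter α n)⁻¹⌋₊ : ℕ) : ℝ) = (⌊(gaussIter α n)⁻¹⌋ : ℝ) :=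
    natCast_floor_eq_intCast_floor (inv_nonneg.mpr hp.le)
  rw [gaussIter_succ, cfa_succ, hf, ← Int.self_sub_floor]
  field_simp

theorem located_sw (α θ : ℝ) (hα0 : 0 < α) (hα1 : α < 1) (hirr : Irrational α) (m : ℕ) :
    ∃ L : ℝ, 0 < L ∧
      Located (sturmian α θ) (sw α (m + 2)) (sw α (m + 1)) L (L * gaussIter α (m + 1)) := by
  induction m with
  | zero =>
    refine ⟨α, hα0, ?_⟩
    -- `s₁` has exponent `a₁ - 1`, matching the initial length `1 - α` instead of `1`
    have h := (located_letters α θ hα0 hα1).step hα0 (cfa α 1 - 1)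
    have h1 : 1 ≤ cfa α 1 := by
      rw [cfa_succ α 0, Nat.one_le_floor_iff]
      exact (one_le_inv₀ hα0).mpr hα1.le
    have e := sub_cfa_mul α hα0 hα1 hirr 0 1
    have e0 : gaussIter α 0 = α := rfl
    rw [e0] at e
    have e2 : 1 - α - ((cfa α 1 - 1 : ℕ) : ℝ) * α = α * gaussIter α 1 := by
      rw [Nat.cast_sub h1]
      push_cast
      simp only [zero_add, one_mul] at e
      linarith
    rw [e2] at h
    simpa [sw] using h
  | succ m ih =>
    obtain ⟨L, hL, h⟩ := ih
    have hp := mul_pos hL (gaussIter_spec α hα0 hα1 hirr (m + 1)).1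
    refine ⟨L * gaussIter α (m + 1), hp, ?_⟩
    have h := h.step hp (cfa α (m + 2))
    rw [sub_cfa_mul α hα0 hα1 hirr (m + 1) L] at h
    simpa [sw] using h


/-! ### Lengths of runs -/

/-- In the `(n,α)`-partition of `v_{α,θ}` (with `n ≥ 1`), every block of the form
`s_n` lies in a maximal run `I = {d, …, d+l-1}` of consecutive `s_n`-blocks of length
`l ∈ {a_{n+1}, a_{n+1}+1}`, bordered on both sides by `s_{n-1}`-blocks
(here `s_n = sw α (n+1)`, `s_{n-1} = sw α n`, `a_{n+1} = cfa α (n+1)`). -/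
theorem nPartition_block_runs
    (α : ℝ) (hα0 : 0 < α) (hα1 : α < 1) (hirr : Irrational α)
    (θ : ℝ) (hθ0 : 0 ≤ θ) (hθ1 : θ < 1) (n : ℕ) (hn : 1 ≤ n)
    (d : ℤ → ℤ) (z : ℤ → List Bool)
    (h : IsNPartition α n (sturmian α θ) d z)
    (j : ℤ) (hj : z j = sw α (n + 1)) :
    ∃ (e : ℤ) (l : ℕ), (l = cfa α (n + 1) ∨ l = cfa α (n + 1) + 1) ∧
      e ≤ j ∧ j < e + (l : ℤ) ∧
      (∀ i : ℤ, e ≤ i → i < e + (l : ℤ) → z i = sw α (n + 1)) ∧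
      z (e - 1) = sw α n ∧ z (e + (l : ℤ)) = sw α n := by
  obtain ⟨m, rfl⟩ : ∃ m, n = m + 1 := ⟨n - 1, by omega⟩
  obtain ⟨L, hL, u, hu⟩ := located_sw α θ hα0 hα1 hirr m
  obtain ⟨hβ0, -, hβ⟩ := gaussIter_spec α hα0 hα1 hirr (m + 1)
  set δ := L * gaussIter α (m + 1) with hδ
  have hδ0 : 0 < δ := mul_pos hL hβ0
  obtain ⟨-, -, hz, hd, hf⟩ := h
  -- in `hf` the list `List.range _` is coerced to a list of integers before `f` is applied
  have hf' : ∀ i : ℤ, z i = (List.range (z i).length).map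
      fun k : ℕ => sturmian α θ (d i + (k : ℤ)) := by
    intro i
    refine (hf i).trans ?_
    simp only [List.bind_eq_flatMap, List.pure_def, List.map_flatMap, List.map_cons, List.map_nil]
    exact (List.map_eq_flatMap ..).symm
  obtain ⟨hA, hB⟩ := hu {k | ∃ i, k = d i ∧ z i = sw α (m + 2)}
    {k | ∃ i, k = d i ∧ z i = sw α (m + 1)} (by
      have hnext : ∀ i, (∃ i', d i + (z i).length = d i' ∧ z i' = sw α (m + 2)) ∨
          ∃ i', d i + (z i).length = d i' ∧ z i' = sw α (m + 1) := fun i =>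
        (hz (i + 1)).imp (fun h => ⟨i + 1, (hd i).symm, h⟩) (fun h => ⟨i + 1, (hd i).symm, h⟩)
      constructor
      · rintro _ ⟨i, rfl, hi⟩
        rw [← hi]
        refine ⟨reads_of_eq_map _ _ _ (hf' i), ?_⟩
        simp only [Set.mem_ofPred_eq, hi]
        simpa only [hi] using hnext i
      · rintro _ ⟨i, rfl, hi⟩
        rw [← hi]
        refine ⟨reads_of_eq_map _ _ _ (hf' i), ?_⟩
        simp only [Set.mem_ofPred_eq, hi]
        simpa only [hi] using hnext i)
  have hA' : ∀ i, z i = sw α (m + 2) →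
      0 ≤ u (d i) ∧ u (d i) ≤ L ∧ u (d (i + 1)) = u (d i) + δ := by
    intro i hi
    have := hA (d i) ⟨i, rfl, hi⟩
    rwa [← hi, ← hd i] at this
  have hB' : ∀ i, z i = sw α (m + 1) →
      L ≤ u (d i) ∧ u (d i) ≤ L + δ ∧ u (d (i + 1)) = u (d i) - L := by
    intro i hi
    have := hB (d i) ⟨i, rfl, hi⟩
    rwa [← hi, ← hd i] at this
  -- along a run of blocks `s_n` the coordinate grows linearly
  have hrun : ∀ (i : ℤ) (t : ℕ), (∀ s : ℕ, s < t → z (i + s) = sw α (m + 2)) →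
      u (d (i + t)) = u (d i) + t * δ := by
    intro i t
    induction t with
    | zero => simp
    | succ t ih =>
      intro hs
      have e1 := ih fun s h => hs s (by omega)
      have e2 := (hA' _ (hs t (by omega))).2.2
      rw [e1] at e2
      have e3 : i + ((t + 1 : ℕ) : ℤ) = i + t + 1 := by push_cast; ring
      rw [e3, e2]
      push_cast
      ring
  -- hence no run exceeds `N` blocks
  obtain ⟨N, hN⟩ := exists_nat_gt (L / δ)
  rw [div_lt_iff₀ hδ0] at hN
  have hlong : ∀ i : ℤ, ∃ s : ℕ, s ≤ N ∧ z (i + s) = sw α (m + 1) := by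
    intro i
    by_contra! hc
    have hall : ∀ s : ℕ, s ≤ N → z (i + s) = sw α (m + 2) := fun s hs =>
      (hz (i + s)).resolve_right (hc s hs)
    have e := hrun i N fun s hs => hall s hs.le
    have e1 := (hA' _ (hall N le_rfl)).2.1
    have e2 := hall 0 (Nat.zero_le _)
    have e3 := (hA' _ e2).1
    simp only [Nat.cast_zero, add_zero] at e3
    linarith
  have hright : ∃ s : ℕ, z (j + s) = sw α (m + 1) := (hlong j).imp fun _ h => h.2
  have hleft : ∃ s : ℕ, z (j - s) = sw α (m + 1) := by
    obtain ⟨s, hs, h⟩ := hlong (j - N)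
    refine ⟨N - s, ?_⟩
    rw [Nat.cast_sub hs]
    convert h using 2
    ring
  classical
  have hne : sw α (m + 2) ≠ sw α (m + 1) := by
    intro hc
    have e1 := (hA' j hj).2.2
    have e2 := (hB' j (hj.trans hc)).2.2
    linarith
  set r := Nat.find hright with hr
  set t := Nat.find hleft with ht
  have hr1 : z (j + r) = sw α (m + 1) := Nat.find_spec hright
  have ht1 : z (j - t) = sw α (m + 1) := Nat.find_spec hleft
  have hr2 : ∀ s < r, z (j + s) = sw α (m + 2) := fun s hs =>
    (hz _).resolve_right (Nat.find_min hright hs)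
  have ht2 : ∀ s < t, z (j - s) = sw α (m + 2) := fun s hs =>
    (hz _).resolve_right (Nat.find_min hleft hs)
  have hr0 : r ≠ 0 := by
    intro h0
    rw [h0] at hr1
    simp only [Nat.cast_zero, add_zero] at hr1
    exact hne (hj.symm.trans hr1)
  have ht0 : t ≠ 0 := by
    intro h0
    rw [h0] at ht1
    simp only [Nat.cast_zero, sub_zero] at ht1
    exact hne (hj.symm.trans ht1)
  have hmid : ∀ i : ℤ, j - t + 1 ≤ i → i < j + r → z i = sw α (m + 2) := by
    intro i h1 h2
    rcases le_total j i with hij | hij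
    · have := hr2 (i - j).toNat (by omega)
      rwa [Int.toNat_of_nonneg (by omega), add_sub_cancel] at this
    · have := ht2 (j - i).toNat (by omega)
      rwa [Int.toNat_of_nonneg (by omega), sub_sub_cancel] at this
  have hl : j - t + 1 + ((r + t - 1 : ℕ) : ℤ) = j + r := by omega
  refine ⟨j - t + 1, r + t - 1, ?_, by omega, by omega, ?_, ?_, ?_⟩
  · have e1 := hrun (j - t + 1) (r + t - 1) fun s hs => hmid _ (by omega) (by omega)
    rw [hl] at e1
    generalize r + t - 1 = l at e1
    obtain ⟨b1, b2, b3⟩ := hB' _ ht1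
    obtain ⟨c1, c2, -⟩ := hB' _ hr1
    rw [b3] at e1
    -- `L / δ` is irrational with floor `a_{n+1}`
    have hLδ : L = (gaussIter α (m + 1))⁻¹ * δ := by
      rw [hδ]; field_simp
    have f1 : ((cfa α (m + 2) : ℕ) : ℝ) < (gaussIter α (m + 1))⁻¹ :=
      lt_of_le_of_ne (Nat.floor_le (inv_nonneg.mpr hβ0.le))
        ((irrational_inv_iff.mpr hβ).ne_nat _).symm
    have f2 : (gaussIter α (m + 1))⁻¹ < (cfa α (m + 2) : ℕ) + 1 := Nat.lt_floor_add_one _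
    have g1 : (gaussIter α (m + 1))⁻¹ ≤ l + 1 := by
      refine le_of_mul_le_mul_right ?_ hδ0
      rw [← hLδ]
      linarith
    have g2 : (l : ℝ) ≤ (gaussIter α (m + 1))⁻¹ + 1 := by
      refine le_of_mul_le_mul_right ?_ hδ0
      rw [add_mul, ← hLδ]
      linarith
    have k1 : cfa α (m + 2) < l + 1 := by exact_mod_cast f1.trans_le g1
    have k2 : l < cfa α (m + 2) + 2 := by
      have : (l : ℝ) < (cfa α (m + 2) : ℕ) + 2 := by linarith
      exact_mod_cast this
    show l = cfa α (m + 2) ∨ l = cfa α (m + 2) + 1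
    omega
  · intro i h1 h2
    exact hmid i h1 (by omega)
  · rwa [add_sub_cancel_right]
  · rwa [hl]
end

section
/- Let α ∈ (0,1) be irrational with continued fraction expansion α = [a_1,a_2,a_3,...]. For every n ≥ 1, there exist palindromic words π_{2n} and π_{2n+1} over {0,1} such that s_{2n} = π_{2n} · 10 and s_{2n+1} = π_{2n+1} · 01 (concatenation of π with the two-letter word). -/
/-- The words `u`, `v` commute up to their last two letters, which are `a b` in `u v` and `b a` in
`v u`; the common prefix `P`, as well as `u P` and `v P`, are palindromes. -/
def StdPair (a b : Bool) (u v : List Bool) : Prop :=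
  ∃ P : List Bool, P.reverse = P ∧ P ++ u.reverse = u ++ P ∧ P ++ v.reverse = v ++ P ∧
    u ++ v = P ++ [a, b] ∧ v ++ u = P ++ [b, a]

lemma StdPair.symm {a b : Bool} {u v : List Bool} (h : StdPair a b u v) : StdPair b a v u := by
  obtain ⟨P, h1, h2, h3, h4, h5⟩ := h
  exact ⟨P, h1, h3, h2, h5, h4⟩

lemma StdPair.step {a b : Bool} {u v : List Bool} (h : StdPair a b u v) :
    StdPair a b u (u ++ v) := by
  obtain ⟨P, h1, h2, h3, h4, h5⟩ := h
  refine ⟨u ++ P, ?_, ?_, ?_, ?_, ?_⟩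
  · rw [List.reverse_append, h1, h2]
  · rw [List.append_assoc, h2]
  · rw [List.reverse_append, List.append_assoc, ← List.append_assoc P, h3, List.append_assoc v, h2]
    simp only [List.append_assoc]
  · rw [h4, List.append_assoc]
  · rw [List.append_assoc, h5, List.append_assoc]

lemma StdPair.pow {a b : Bool} {u v : List Bool} (h : StdPair a b u v) (k : ℕ) :
    StdPair a b u ((List.replicate k u).flatten ++ v) := by
  induction k with
  | zero => simpa using h
  | succ k ih => simpa [List.replicate_succ] using ih.step

lemma StdPair.palindrome {a b : Bool} {u v : List Bool} (h : StdPair a b u v) {k : ℕ}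
    (hk : 1 ≤ k) :
    ∃ p : List Bool, p.reverse = p ∧ (List.replicate k u).flatten ++ v = p ++ [a, b] := by
  obtain ⟨j, rfl⟩ := Nat.exists_eq_add_of_le' hk
  obtain ⟨P, h1, -, -, h4, -⟩ := h.pow j
  exact ⟨P, h1, by simpa [List.replicate_succ] using h4⟩

lemma gauss_iterate_mem {α : ℝ} (hα0 : 0 < α) (hα1 : α < 1) (hirr : Irrational α) (n : ℕ) :
    0 < (fun x : ℝ => Int.fract x⁻¹)^[n] α ∧ (fun x : ℝ => Int.fract x⁻¹)^[n] α < 1 ∧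
      Irrational ((fun x : ℝ => Int.fract x⁻¹)^[n] α) := by
  induction n with
  | zero => exact ⟨hα0, hα1, hirr⟩
  | succ n ih =>
    rw [Function.iterate_succ_apply']
    have h : Irrational (Int.fract ((fun x : ℝ => Int.fract x⁻¹)^[n] α)⁻¹) :=
      ih.2.2.inv.sub_intCast _
    exact ⟨(Int.fract_nonneg _).lt_of_ne' h.ne_zero, Int.fract_lt_one _, h⟩

lemma cfa_pos {α : ℝ} (hα0 : 0 < α) (hα1 : α < 1) (hirr : Irrational α) (n : ℕ) :
    1 ≤ cfa α n := by
  obtain ⟨h0, h1, -⟩ := gauss_iterate_mem hα0 hα1 hirr (n - 1)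
  exact Nat.le_floor (by simpa using (one_le_inv₀ h0).2 h1.le)

/-- The pair `(s₁, s₀)` is standard with final letters `10`, and the letters are exchanged at each
step. -/
lemma stdPair_sw (α : ℝ) (m : ℕ) :
    StdPair true false (sw α (2 * m + 2)) (sw α (2 * m + 1)) ∧
    StdPair false true (sw α (2 * m + 3)) (sw α (2 * m + 2)) := by
  have odd_step : ∀ m, StdPair true false (sw α (2 * m + 2)) (sw α (2 * m + 1)) →
      StdPair false true (sw α (2 * m + 3)) (sw α (2 * m + 2)) := fun m h => by
    rw [sw]
    exact (h.pow _).symm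
  induction m with
  | zero =>
    have h : StdPair false true [false] [true] := ⟨[], by simp⟩
    have h1 : StdPair true false (sw α (2 * 0 + 2)) (sw α (2 * 0 + 1)) := by
      simpa only [Nat.mul_zero, Nat.zero_add, sw] using (h.pow (cfa α 1 - 1)).symm
    exact ⟨h1, odd_step 0 h1⟩
  | succ m ih =>
    have h1 : StdPair true false (sw α (2 * m + 1 + 3)) (sw α (2 * m + 3)) := by
      rw [sw]
      exact (ih.2.pow _).symm
    exact ⟨h1, odd_step (m + 1) h1⟩

/-- For every `n ≥ 1` there are palindromes `π_{2n}`, `π_{2n+1}` with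
`s_{2n} = π_{2n} · 10` and `s_{2n+1} = π_{2n+1} · 01`
(here `s_m = sw α (m+1)`, the letter `1` is `true` and `0` is `false`). -/
theorem sturmianWord_palindrome
    (α : ℝ) (hα0 : 0 < α) (hα1 : α < 1) (hirr : Irrational α)
    (n : ℕ) (hn : 1 ≤ n) :
    (∃ p : List Bool, p.reverse = p ∧ sw α (2 * n + 1) = p ++ [true, false]) ∧
    (∃ p : List Bool, p.reverse = p ∧ sw α (2 * n + 2) = p ++ [false, true]) := by
  obtain ⟨m, rfl⟩ := Nat.exists_eq_add_of_le' hn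
  obtain ⟨h1, h2⟩ := stdPair_sw α m
  constructor
  · change ∃ p : List Bool, p.reverse = p ∧ sw α (2 * m + 3) = _
    rw [sw]
    exact h1.palindrome (cfa_pos hα0 hα1 hirr _)
  · change ∃ p : List Bool, p.reverse = p ∧ sw α (2 * m + 1 + 3) = _
    rw [sw]
    exact h2.palindrome (cfa_pos hα0 hα1 hirr _)
end

section
/- Let α ∈ (0,1) be irrational with continued fraction expansion α = [a_1,a_2,a_3,...] and rational approximants p_n/q_n. For every n ≥ 1, the word s_{2n} coincides with the terminal segment of v_{α,0} ending at 0: s_{2n} = v_{α,0}(1−q_{2n}) v_{α,0}(2−q_{2n}) ... v_{α,0}(0). In other words, v_{α,0} restricted to {..., −2, −1, 0} equals the left-infinite word d_α = lim_{n→∞} s_{2n}. -/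
namespace SturmianLeft

/-! ### Continued fractions -/

/-- The `n`-th iterate of `α` under the Gauss map. -/
noncomputable def gauss (α : ℝ) (n : ℕ) : ℝ := (fun x : ℝ => Int.fract x⁻¹)^[n] α

/-- Numerators of the rational approximants, matching `qden`. -/
noncomputable def pnum (α : ℝ) : ℕ → ℕ
  | 0 => 0
  | 1 => 1
  | n + 2 => cfa α (n + 2) * pnum α (n + 1) + pnum α n

/-- The approximation error `|q_n α - p_n|`, as a product of Gauss-map iterates. -/
noncomputable def err (α : ℝ) (n : ℕ) : ℝ := ∏ i ∈ Finset.range (n + 1), gauss α i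

lemma gauss_succ (α : ℝ) (n : ℕ) : gauss α (n + 1) = Int.fract (gauss α n)⁻¹ := by
  simp only [gauss, Function.iterate_succ_apply']

variable {α : ℝ}

lemma gauss_mem (hα0 : 0 < α) (hα1 : α < 1) (hirr : Irrational α) (n : ℕ) :
    0 < gauss α n ∧ gauss α n < 1 ∧ Irrational (gauss α n) := by
  induction n with
  | zero => exact ⟨hα0, hα1, hirr⟩
  | succ n ih =>
    rw [gauss_succ]
    have hir : Irrational (Int.fract (gauss α n)⁻¹) := by
      rw [Int.fract]
      exact ih.2.2.inv.sub_intCast _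
    exact ⟨lt_of_le_of_ne (Int.fract_nonneg _) hir.ne_zero.symm, Int.fract_lt_one _, hir⟩

lemma gauss_inv (hα0 : 0 < α) (hα1 : α < 1) (hirr : Irrational α) (n : ℕ) :
    (gauss α n)⁻¹ = cfa α (n + 1) + gauss α (n + 1) := by
  have h0 := (gauss_mem hα0 hα1 hirr n).1
  have hc : cfa α (n + 1) = ⌊(gauss α n)⁻¹⌋₊ := rfl
  rw [gauss_succ, hc, natCast_floor_eq_intCast_floor (inv_nonneg.2 h0.le)]
  exact (Int.floor_add_fract _).symm

lemma cfa_pos (hα0 : 0 < α) (hα1 : α < 1) (hirr : Irrational α) (n : ℕ) :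
    1 ≤ cfa α (n + 1) := by
  have h := gauss_mem hα0 hα1 hirr n
  have hc : cfa α (n + 1) = ⌊(gauss α n)⁻¹⌋₊ := rfl
  rw [hc]
  exact Nat.le_floor (by simpa using (one_le_inv₀ h.1).2 h.2.1.le)

lemma err_pos (hα0 : 0 < α) (hα1 : α < 1) (hirr : Irrational α) (n : ℕ) : 0 < err α n :=
  Finset.prod_pos fun i _ => (gauss_mem hα0 hα1 hirr i).1

lemma err_zero : err α 0 = α := by simp [err, gauss]

lemma err_succ (n : ℕ) : err α (n + 1) = err α n * gauss α (n + 1) := by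
  rw [err, Finset.prod_range_succ, ← err]

lemma err_anti (hα0 : 0 < α) (hα1 : α < 1) (hirr : Irrational α) : Antitone (err α) := by
  refine antitone_nat_of_succ_le fun n => ?_
  rw [err_succ]
  have h := gauss_mem hα0 hα1 hirr (n + 1)
  exact mul_le_of_le_one_right (err_pos hα0 hα1 hirr n).le h.2.1.le

lemma err_one (hα0 : 0 < α) (hα1 : α < 1) (hirr : Irrational α) :
    err α 1 = 1 - cfa α 1 * α := by
  have h := gauss_inv hα0 hα1 hirr 0
  have hg : gauss α 0 = α := rfl
  rw [hg] at h
  rw [err_succ, err_zero]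
  have h2 : gauss α (0 + 1) = α⁻¹ - cfa α (0 + 1) := by linarith
  rw [h2]
  field_simp

lemma err_rec (hα0 : 0 < α) (hα1 : α < 1) (hirr : Irrational α) (n : ℕ) :
    err α (n + 2) = err α n - cfa α (n + 2) * err α (n + 1) := by
  have h := gauss_inv hα0 hα1 hirr (n + 1)
  have h0 := (gauss_mem hα0 hα1 hirr (n + 1)).1
  have h2 : gauss α (n + 2) = (gauss α (n + 1))⁻¹ - cfa α (n + 2) := by linarith
  rw [err_succ (n + 1), h2, err_succ n]
  field_simp

lemma qden_mul_sub (hα0 : 0 < α) (hα1 : α < 1) (hirr : Irrational α) (n : ℕ) :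
    (qden α n : ℝ) * α - pnum α n = (-1) ^ n * err α n := by
  induction n using Nat.twoStepInduction with
  | zero => simp [qden, pnum, err_zero]
  | one => rw [err_one hα0 hα1 hirr]; simp [qden, pnum]
  | more n h0 h1 =>
    rw [err_rec hα0 hα1 hirr]
    simp only [qden, pnum]
    push_cast
    linear_combination (cfa α (n + 2) : ℝ) * h1 + h0

lemma qden_pos (hα0 : 0 < α) (hα1 : α < 1) (hirr : Irrational α) (n : ℕ) : 1 ≤ qden α n := by
  induction n using Nat.twoStepInduction with
  | zero => simp [qden]
  | one => exact cfa_pos hα0 hα1 hirr 0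
  | more n h0 h1 => simp only [qden]; omega

lemma det_eq (n : ℕ) :
    (qden α n : ℤ) * pnum α (n + 1) - qden α (n + 1) * pnum α n = (-1) ^ n := by
  induction n with
  | zero => simp [qden, pnum]
  | succ n ih =>
    simp only [qden, pnum]
    push_cast
    linear_combination -ih

/-- Best approximation: `‖j α‖ ≥ |q_n α - p_n|` for `0 < j < q_{n+1}`.  Expanding `(j, M)` in the
lattice basis `(q_n, p_n)`, `(q_{n+1}, p_{n+1})`, the first coefficient is nonzero and the second is zero or
of opposite sign, while the two errors alternate in sign, so the contributions add up. -/
lemma best_approx (hα0 : 0 < α) (hα1 : α < 1) (hirr : Irrational α) (n : ℕ) (j M : ℤ)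
    (hj0 : 0 < j) (hj : j < qden α (n + 1)) : err α n ≤ |(j : ℝ) * α - M| := by
  obtain ⟨x, y, hx, hy⟩ : ∃ x y : ℤ, j = x * qden α n + y * qden α (n + 1) ∧
      M = x * pnum α n + y * pnum α (n + 1) := by
    have hd := det_eq (α := α) n
    have hs : ((-1 : ℤ) ^ n) * (-1) ^ n = 1 := by rw [← mul_pow]; simp
    refine ⟨(-1) ^ n * (j * pnum α (n + 1) - M * qden α (n + 1)),
      (-1) ^ n * (M * qden α n - j * pnum α n), ?_, ?_⟩
    · linear_combination (-(j * (-1) ^ n)) * hd - j * hs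
    · linear_combination (-(M * (-1) ^ n)) * hd - M * hs
  have hq0 : (1 : ℤ) ≤ qden α n := by exact_mod_cast qden_pos hα0 hα1 hirr n
  have hq1 : (1 : ℤ) ≤ qden α (n + 1) := by exact_mod_cast qden_pos hα0 hα1 hirr (n + 1)
  have he0 := err_pos hα0 hα1 hirr n
  have he1 := err_pos hα0 hα1 hirr (n + 1)
  have key : (j : ℝ) * α - M = (-1) ^ n * (x * err α n - y * err α (n + 1)) := by
    have h0 := qden_mul_sub hα0 hα1 hirr n
    have h1 := qden_mul_sub hα0 hα1 hirr (n + 1)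
    rw [hx, hy]
    push_cast
    linear_combination (x : ℝ) * h0 + (y : ℝ) * h1
  rw [key, abs_mul, abs_pow, abs_neg, abs_one, one_pow, one_mul]
  rcases lt_trichotomy x 0 with hx0 | hx0 | hx0
  · have hy0 : 0 < y := by
      by_contra! h
      nlinarith
    have hx' : (x : ℝ) ≤ -1 := by exact_mod_cast (by omega : x ≤ -1)
    have hy' : (0 : ℝ) < y := by exact_mod_cast hy0
    rw [le_abs]
    right
    nlinarith [mul_pos hy' he1]
  · subst hx0
    exfalso
    rcases le_or_gt y 0 with h | h <;> nlinarith
  · have hy0 : y ≤ 0 := by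
      by_contra! h
      nlinarith
    have hx' : (1 : ℝ) ≤ x := by exact_mod_cast hx0
    have hy' : (y : ℝ) ≤ 0 := by exact_mod_cast hy0
    rw [le_abs]
    left
    nlinarith [mul_nonneg (neg_nonneg.2 hy') he1.le]

/-! ### The two mechanical words -/

/-- The height function `⌊m α⌋` (for even `n`) or `⌈m α⌉` (for odd `n`). -/
noncomputable def mech (α : ℝ) (n : ℕ) (m : ℤ) : ℤ :=
  if Even n then ⌊(m : ℝ) * α⌋ else ⌈(m : ℝ) * α⌉

/-- The letter at position `k` of the mechanical word with height function `mech α n`. -/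
noncomputable def letter (α : ℝ) (n : ℕ) (k : ℤ) : Bool :=
  decide (mech α n (k + 1) ≠ mech α n k)

/-- The suffix of length `q_n`, ending at position `0`, of the mechanical word of parity `n`. -/
noncomputable def suffixWord (α : ℝ) (n : ℕ) : List Bool :=
  (List.range (qden α n)).map fun k : ℕ => letter α n ((k : ℤ) + 1 - (qden α n : ℤ))

lemma le_sub_ceil (hα0 : 0 < α) (hα1 : α < 1) (hirr : Irrational α) (n : ℕ) (m : ℤ)
    (hm : 1 - (qden α (n + 1) : ℤ) ≤ m) (hm1 : m ≤ 1) :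
    err α n ≤ m * α - ⌈(m : ℝ) * α⌉ + 1 := by
  have hle : err α n ≤ α := by
    simpa [err_zero] using err_anti hα0 hα1 hirr (Nat.zero_le n)
  rcases lt_trichotomy m 0 with h | h | h
  · have hb := best_approx hα0 hα1 hirr n (-m) (-(⌈(m : ℝ) * α⌉ - 1)) (by omega) (by omega)
    have hc := Int.ceil_lt_add_one ((m : ℝ) * α)
    push_cast at hb
    rw [abs_of_neg (by linarith)] at hb
    linarith
  · subst h
    simp only [Int.cast_zero, zero_mul, Int.ceil_zero]
    linarith
  · obtain rfl : m = 1 := by omega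
    have hc : ⌈((1 : ℤ) : ℝ) * α⌉ = 1 := by
      rw [Int.ceil_eq_iff]; push_cast; constructor <;> linarith
    rw [hc]
    push_cast
    linarith

/-- Positive `n` is needed at `m = 1`, where the bound reads `err α n ≤ 1 - α`. -/
lemma le_floor_sub (hα0 : 0 < α) (hα1 : α < 1) (hirr : Irrational α) (n : ℕ) (hn : 1 ≤ n)
    (m : ℤ) (hm : 1 - (qden α (n + 1) : ℤ) ≤ m) (hm1 : m ≤ 1) :
    err α n ≤ ⌊(m : ℝ) * α⌋ + 1 - m * α := by
  have hle : err α n ≤ 1 - α := by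
    have h1 := err_anti hα0 hα1 hirr hn
    rw [err_one hα0 hα1 hirr] at h1
    have ha : (1 : ℝ) ≤ cfa α 1 := by exact_mod_cast cfa_pos hα0 hα1 hirr 0
    nlinarith
  rcases lt_trichotomy m 0 with h | h | h
  · have hb := best_approx hα0 hα1 hirr n (-m) (-(⌊(m : ℝ) * α⌋ + 1)) (by omega) (by omega)
    have hc := Int.lt_floor_add_one ((m : ℝ) * α)
    push_cast at hb
    rw [abs_of_pos (by linarith)] at hb
    linarith
  · subst h
    simp only [Int.cast_zero, zero_mul, Int.floor_zero]
    linarith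
  · obtain rfl : m = 1 := by omega
    have hc : ⌊((1 : ℤ) : ℝ) * α⌋ = 0 := by
      rw [Int.floor_eq_iff]; push_cast; constructor <;> linarith
    rw [hc]
    push_cast
    linarith

/-- Translating by `Q = q_n + i q_{n+1}` turns the mechanical word of parity `n + 1` into the one
of parity `n`: up to an additive constant `c` the height functions agree on `[1 - q_{n+1}, 1]`. -/
lemma mech_shift (hα0 : 0 < α) (hα1 : α < 1) (hirr : Irrational α) (n i : ℕ)
    (hi : i < cfa α (n + 2)) : ∃ c : ℤ, ∀ m : ℤ, 1 - (qden α (n + 1) : ℤ) ≤ m → m ≤ 1 →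
      mech α n (m - (qden α n + i * qden α (n + 1))) = mech α (n + 1) m + c := by
  have h0 := qden_mul_sub hα0 hα1 hirr n
  have h1 := qden_mul_sub hα0 hα1 hirr (n + 1)
  have he1 := err_pos hα0 hα1 hirr (n + 1)
  have he2 := err_pos hα0 hα1 hirr (n + 2)
  rw [err_rec hα0 hα1 hirr] at he2
  have hi' : (i : ℝ) ≤ cfa α (n + 2) := by exact_mod_cast hi.le
  -- `0 < e_n - i e_{n+1} ≤ e_n`, because `e_n - a_{n+2} e_{n+1} = e_{n+2} > 0`
  have hpos : 0 < err α n - i * err α (n + 1) := by nlinarith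
  have hle : err α n - i * err α (n + 1) ≤ err α n := by
    have : (0 : ℝ) ≤ i * err α (n + 1) := by positivity
    linarith
  have key : ((qden α n : ℝ) + i * qden α (n + 1)) * α - (pnum α n + i * pnum α (n + 1)) =
      (-1) ^ n * (err α n - i * err α (n + 1)) := by
    linear_combination h0 + (i : ℝ) * h1
  rcases Nat.even_or_odd n with hev | hod
  · have hodd : ¬ Even (n + 1) := by simpa [Nat.even_add_one] using hev
    rw [hev.neg_one_pow, one_mul] at key
    refine ⟨-1 - (pnum α n + i * pnum α (n + 1)), fun m hm hm1 => ?_⟩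
    have hb := le_sub_ceil hα0 hα1 hirr n m hm hm1
    have hc := Int.le_ceil ((m : ℝ) * α)
    simp only [mech, if_pos hev, if_neg hodd]
    rw [Int.floor_eq_iff]
    push_cast
    constructor <;> linarith
  · have hev : Even (n + 1) := hod.add_one
    have hnev : ¬ Even n := Nat.not_even_iff_odd.2 hod
    rw [hod.neg_one_pow] at key
    refine ⟨1 - (pnum α n + i * pnum α (n + 1)), fun m hm hm1 => ?_⟩
    have hb := le_floor_sub hα0 hα1 hirr n hod.pos m hm hm1
    have hc := Int.floor_le ((m : ℝ) * α)
    simp only [mech, if_pos hev, if_neg hnev]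
    rw [Int.ceil_eq_iff]
    push_cast
    constructor <;> linarith

lemma letter_shift (hα0 : 0 < α) (hα1 : α < 1) (hirr : Irrational α) (n i : ℕ)
    (hi : i < cfa α (n + 2)) (k : ℤ) (hk : 1 - (qden α (n + 1) : ℤ) ≤ k) (hk0 : k ≤ 0) :
    letter α n (k - (qden α n + i * qden α (n + 1))) = letter α (n + 1) k := by
  obtain ⟨c, hc⟩ := mech_shift hα0 hα1 hirr n i hi
  have e1 := hc k hk (by omega)
  have e2 := hc (k + 1) (by omega) (by omega)
  rw [add_sub_right_comm] at e2
  simp only [letter, e1, e2, ne_eq, add_left_inj]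

/-! ### The words `s_n` as suffixes -/

lemma flatten_replicate_append {β : Type*} (a q r : ℕ) (u w f : ℕ → β)
    (hu : ∀ i < a, ∀ k < q, f (i * q + k) = u k) (hw : ∀ k < r, f (a * q + k) = w k) :
    (List.replicate a ((List.range q).map u)).flatten ++ (List.range r).map w =
      (List.range (a * q + r)).map f := by
  induction a generalizing f with
  | zero =>
    simp only [List.replicate_zero, List.flatten_nil, List.nil_append, Nat.zero_mul, Nat.zero_add]
    refine List.map_congr_left fun k hk => ?_
    simpa using (hw k (List.mem_range.1 hk)).symm
  | succ a ih =>
    rw [List.replicate_succ, List.flatten_cons, List.append_assoc,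
      ih (fun k => f (q + k)) (fun i hi k hk => ?_) (fun k hk => ?_),
      show (a + 1) * q + r = q + (a * q + r) by ring, List.range_add (n := q), List.map_append,
      List.map_map]
    · congr 1
      refine List.map_congr_left fun k hk => ?_
      simpa using (hu 0 (by omega) k (List.mem_range.1 hk)).symm
    · rw [← hu (i + 1) (by omega) k hk]; congr 1; ring
    · rw [← hw k hk]; congr 1; ring

lemma sw_zero : sw α (0 + 1) = suffixWord α 0 ↔ letter α 0 0 = false := by
  have h : suffixWord α 0 = [letter α 0 0] := by simp [suffixWord, qden]
  rw [h, zero_add, sw, List.cons.injEq, and_iff_left rfl, eq_comm]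

lemma sw_one (hα0 : 0 < α) (hα1 : α < 1) (hirr : Irrational α) :
    sw α (1 + 1) = suffixWord α 1 := by
  have ha : 1 ≤ cfa α 1 := cfa_pos hα0 hα1 hirr 0
  have he := err_pos hα0 hα1 hirr 1
  rw [err_one hα0 hα1 hirr] at he
  have hne : ¬ Even 1 := by decide
  have hz : ∀ m : ℤ, 1 - (cfa α 1 : ℤ) ≤ m → m ≤ 0 → mech α 1 m = 0 := by
    intro m hm hm0
    have h1 : (1 : ℝ) - cfa α 1 ≤ m := by exact_mod_cast hm
    have h2 : (m : ℝ) ≤ 0 := by exact_mod_cast hm0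
    simp only [mech, if_neg hne]
    rw [Int.ceil_eq_iff]
    push_cast
    constructor <;> nlinarith
  have hone : mech α 1 1 = 1 := by
    simp only [mech, if_neg hne]
    rw [Int.ceil_eq_iff]
    push_cast
    constructor <;> linarith
  have h := flatten_replicate_append (cfa α 1 - 1) 1 1 (fun _ => false) (fun _ => true)
    (fun k : ℕ => letter α 1 ((k : ℤ) + 1 - (cfa α 1 : ℤ))) (fun i hi k hk => ?_) (fun k hk => ?_)
  · rw [show (cfa α 1 - 1) * 1 + 1 = cfa α 1 by omega] at h
    simpa [sw, suffixWord, qden] using h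
  · obtain rfl : k = 0 := by omega
    simp only [letter]
    rw [hz _ (by push_cast; omega) (by push_cast; omega),
      hz _ (by push_cast; omega) (by push_cast; omega)]
    simp
  · obtain rfl : k = 0 := by omega
    simp only [letter]
    rw [show (((cfa α 1 - 1) * 1 + 0 : ℕ) : ℤ) + 1 - cfa α 1 = 0 by push_cast; omega,
      hz 0 (by omega) le_rfl, zero_add, hone]
    simp

lemma letter_add_two (n : ℕ) : letter α (n + 2) = letter α n := by
  have h : mech α (n + 2) = mech α n := by
    ext m
    by_cases hn : Even n <;> simp [mech, Nat.even_add, hn]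
  ext k
  simp only [letter, h]

lemma sw_eq_suffixWord (hα0 : 0 < α) (hα1 : α < 1) (hirr : Irrational α) (n : ℕ) :
    sw α (n + 1) = suffixWord α n := by
  induction n using Nat.twoStepInduction with
  | zero =>
    rw [sw_zero]
    have h : ⌊α⌋ = 0 := by rw [Int.floor_eq_iff]; push_cast; constructor <;> linarith
    simp [letter, mech, h]
  | one => exact sw_one hα0 hα1 hirr
  | more n h0 h1 =>
    rw [sw, h1, h0]
    simp only [suffixWord]
    rw [show qden α (n + 2) = cfa α (n + 2) * qden α (n + 1) + qden α n from rfl]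
    apply flatten_replicate_append
    · intro i hi k hk
      -- the `i`-th block from the left is the `(a - 1 - i)`-th from the right
      have h := letter_shift hα0 hα1 hirr n (cfa α (n + 2) - 1 - i) (by omega)
        ((k : ℤ) + 1 - (qden α (n + 1) : ℤ)) (by omega) (by omega)
      rw [← h]
      have hc : ((cfa α (n + 2) - 1 - i : ℕ) : ℤ) = cfa α (n + 2) - 1 - i := by omega
      rw [hc]
      rw [letter_add_two]
      congr 1
      push_cast
      ring
    · intro k hk
      rw [letter_add_two]
      congr 1
      push_cast
      ring

lemma letter_eq_sturmian (hα0 : 0 < α) (n : ℕ) (hn : Even n) (k : ℤ) :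
    letter α n k = sturmian α 0 k := by
  have h1 := Int.floor_le ((k : ℝ) * α)
  have h2 := Int.lt_floor_add_one ((k : ℝ) * α)
  have hiff : mech α n (k + 1) ≠ mech α n k ↔ 1 - α ≤ Int.fract ((k : ℝ) * α + 0) := by
    simp only [mech, if_pos hn, add_zero]
    rw [ne_eq, Int.floor_eq_iff, Int.fract]
    push_cast
    constructor
    · intro h
      by_contra! h'
      exact h ⟨by linarith, by linarith⟩
    · rintro h ⟨_, h'⟩
      linarith
  rw [letter, sturmian]
  split_ifs with h
  · exact decide_eq_true (hiff.2 h)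
  · exact decide_eq_false (mt hiff.1 h)

end SturmianLeft

/-- For every `n ≥ 1`, the word `s_{2n}` (of length `q_{2n}`) coincides with
`v_{α,0}(1 - q_{2n}) … v_{α,0}(-1) v_{α,0}(0)`; that is, `v_{α,0}` restricted to
`{…, -2, -1, 0}` is the left-infinite limit word `d_α` (here `s_{2n} = sw α (2n+1)`). -/
theorem sturmianWord_eq_potential_left
    (α : ℝ) (hα0 : 0 < α) (hα1 : α < 1) (hirr : Irrational α)
    (n : ℕ) (hn : 1 ≤ n) :
    sw α (2 * n + 1) =
      (List.range (qden α (2 * n))).map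
        fun k => sturmian α 0 ((k : ℤ) + 1 - (qden α (2 * n) : ℤ)) := by
  rw [SturmianLeft.sw_eq_suffixWord hα0 hα1 hirr, SturmianLeft.suffixWord]
  -- in the statement `k` ranges over the list of integers obtained by casting `List.range`
  simp only [List.pure_def, List.bind_eq_flatMap, ← List.map_eq_flatMap, List.map_map]
  exact List.map_congr_left fun k _ =>
    SturmianLeft.letter_eq_sturmian hα0 (2 * n) (even_two_mul n) _
end
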